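/- Let G be a finite abelian group and let χ = ∑_λ c_λ λ be a generalized character of G (where λ ranges over the irreducible characters of G and c_λ ∈ ℤ) such that χ(x) is a sum of at most two roots of unity for every nonidentity x ∈ G. Then for any two irreducible characters η and θ of G, the coefficients satisfy |c_η − c_θ| ≤ 2. -/

import Mathlib

def IsRootOfUnity (z : ℂ) : Prop := ∃ n : ℕ, 0 < n ∧ z ^ n = 1

def IsSumAtMostTwoRootsOfUnity (z : ℂ) : Prop :=
  z = 0 ∨ IsRootOfUnity z ∨ ∃ u v : ℂ, IsRootOfUnity u ∧ IsRootOfUnity v ∧ z = u + v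

/-!
By orthogonality, `|G| (c η - c θ) = ∑ g, χ g (η⁻¹ g - θ⁻¹ g)`. The term at `g = 1` vanishes, so
only values with `‖χ g‖ ≤ 2` contribute. For `η ≠ θ`, orthogonality also gives
`∑ g, ‖η⁻¹ g - θ⁻¹ g‖² = 2 |G|`, hence `∑ g, ‖η⁻¹ g - θ⁻¹ g‖ ≤ √2 |G|` by Cauchy–Schwarz.
Therefore `|c η - c θ| ≤ 2√2 < 3`, and the left-hand side is an integer.
-/

lemma IsRootOfUnity.norm_eq_one {z : ℂ} (hz : IsRootOfUnity z) : ‖z‖ = 1 := by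
  obtain ⟨n, hn, hzn⟩ := hz
  exact Complex.norm_eq_one_of_pow_eq_one hzn hn.ne'

lemma IsSumAtMostTwoRootsOfUnity.norm_le_two {z : ℂ} (hz : IsSumAtMostTwoRootsOfUnity z) :
    ‖z‖ ≤ 2 := by
  rcases hz with rfl | hz | ⟨u, v, hu, hv, rfl⟩
  · simp
  · linarith [hz.norm_eq_one]
  · linarith [norm_add_le u v, hu.norm_eq_one, hv.norm_eq_one]

section Orthogonality

variable {G R : Type*} [Group G] [Fintype G] [CommRing R] [IsDomain R]

lemma sum_character_mul_inv [DecidableEq (G →* Rˣ)] (η θ : G →* Rˣ) :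
    ∑ g, (η g : R) * ((θ g)⁻¹ : Rˣ) = if η = θ then (Fintype.card G : R) else 0 := by
  classical
  have hone : (Units.coeHom R).comp (η * θ⁻¹ : G →* Rˣ) = 1 ↔ η = θ := by
    rw [← mul_inv_eq_one (a := η), MonoidHom.ext_iff, MonoidHom.ext_iff]
    simp only [MonoidHom.comp_apply, Units.coeHom_apply, MonoidHom.one_apply, Units.val_eq_one]
  simpa [hone] using sum_hom_units ((Units.coeHom R).comp (η * θ⁻¹ : G →* Rˣ))

lemma sum_mul_inv_character_eq_card_mul_coeff {c : (G →* Rˣ) →₀ R} {χ : G → R}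
    (hχ : ∀ g, χ g = c.sum fun lam a => a * (lam g : R)) (η : G →* Rˣ) :
    ∑ g, χ g * ((η g)⁻¹ : Rˣ) = Fintype.card G * c η := by
  classical
  calc ∑ g, χ g * ((η g)⁻¹ : Rˣ)
      = c.sum fun lam a => a * ∑ g, (lam g : R) * ((η g)⁻¹ : Rˣ) := by
        simp only [hχ, Finsupp.sum, Finset.sum_mul, Finset.mul_sum, mul_assoc]
        exact Finset.sum_comm
    _ = Fintype.card G * c η := by
        simp +contextual [sum_character_mul_inv, mul_comm]

lemma sum_sub_character_mul_sub_inv {η θ : G →* Rˣ} (hne : η ≠ θ) :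
    ∑ g, ((η g : R) - θ g) * (((η g)⁻¹ : Rˣ) - ((θ g)⁻¹ : Rˣ)) = 2 * Fintype.card G := by
  classical
  simp only [sub_mul, mul_sub, Finset.sum_sub_distrib, sum_character_mul_inv, if_neg hne,
    if_neg hne.symm, if_true]
  ring

end Orthogonality

lemma norm_character_apply {G K : Type*} [Monoid G] [NormedDivisionRing K] (η : G →* Kˣ) {g : G}
    (hg : IsOfFinOrder g) : ‖(η g : K)‖ = 1 :=
  (Units.isOfFinOrder_val.mpr (η.isOfFinOrder hg)).norm_eq_one

section RCLike

variable {G 𝕜 : Type*} [Group G] [Fintype G] [RCLike 𝕜]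

lemma sum_norm_sub_character_sq {η θ : G →* 𝕜ˣ} (hne : η ≠ θ) :
    ∑ g, ‖(η g : 𝕜) - θ g‖ ^ 2 = 2 * Fintype.card G := by
  have hinv (lam : G →* 𝕜ˣ) (g : G) : (((lam g)⁻¹ : 𝕜ˣ) : 𝕜) = starRingEnd 𝕜 (lam g : 𝕜) := by
    rw [Units.val_inv_eq_inv_val,
      RCLike.inv_eq_conj (norm_character_apply lam (isOfFinOrder_of_finite g))]
  have hsum := sum_sub_character_mul_sub_inv hne
  simp only [hinv, ← map_sub, RCLike.mul_conj] at hsum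
  exact_mod_cast hsum

lemma sum_norm_sub_character_le (η θ : G →* 𝕜ˣ) :
    ∑ g, ‖(η g : 𝕜) - θ g‖ ≤ √2 * Fintype.card G := by
  rcases eq_or_ne η θ with rfl | hne
  · simp
  refine le_of_sq_le_sq ?_ (by positivity)
  calc (∑ g, ‖(η g : 𝕜) - θ g‖) ^ 2
      ≤ Fintype.card G * ∑ g, ‖(η g : 𝕜) - θ g‖ ^ 2 := sq_sum_le_card_mul_sum_sq
    _ = (√2 * Fintype.card G) ^ 2 := by
        rw [sum_norm_sub_character_sq hne, mul_pow, Real.sq_sqrt zero_le_two]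
        ring

end RCLike

lemma norm_coeff_sub_coeff_le {G 𝕜 : Type*} [Group G] [Finite G] [RCLike 𝕜]
    {c : (G →* 𝕜ˣ) →₀ 𝕜} {χ : G → 𝕜} (hχ : ∀ g, χ g = c.sum fun lam a => a * (lam g : 𝕜))
    {B : ℝ} (hB : 0 ≤ B) (hbound : ∀ g, g ≠ 1 → ‖χ g‖ ≤ B) (η θ : G →* 𝕜ˣ) :
    ‖c η - c θ‖ ≤ √2 * B := by
  have := Fintype.ofFinite G
  have hcoeff : Fintype.card G * (c η - c θ) = ∑ g, χ g * (η⁻¹ g - θ⁻¹ g : 𝕜) := by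
    simp only [mul_sub, Finset.sum_sub_distrib, MonoidHom.inv_apply,
      sum_mul_inv_character_eq_card_mul_coeff hχ]
  have hterm (g : G) : ‖χ g * (η⁻¹ g - θ⁻¹ g : 𝕜)‖ ≤ B * ‖(η⁻¹ g - θ⁻¹ g : 𝕜)‖ := by
    rcases eq_or_ne g 1 with rfl | hg
    · simp
    · rw [norm_mul]
      gcongr
      exact hbound g hg
  refine le_of_mul_le_mul_left ?_ (Nat.cast_pos.mpr (Fintype.card_pos (α := G)))
  calc Fintype.card G * ‖c η - c θ‖
      = ‖∑ g, χ g * (η⁻¹ g - θ⁻¹ g : 𝕜)‖ := by rw [← hcoeff, norm_mul, RCLike.norm_natCast]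
    _ ≤ ∑ g, B * ‖(η⁻¹ g - θ⁻¹ g : 𝕜)‖ := norm_sum_le_of_le _ fun g _ => hterm g
    _ ≤ B * (√2 * Fintype.card G) := by
        rw [← Finset.mul_sum]
        gcongr
        exact sum_norm_sub_character_le η⁻¹ θ⁻¹
    _ = Fintype.card G * (√2 * B) := by ring

theorem stmt_16_general {G : Type*} [Group G] [Finite G] (c : (G →* ℂˣ) →₀ ℤ) (χ : G → ℂ)
    (hχ : ∀ g, χ g = c.sum fun lam n => (n : ℂ) * (lam g : ℂ))
    (hbound : ∀ x, x ≠ 1 → ‖χ x‖ ≤ 2) (η θ : G →* ℂˣ) : |c η - c θ| ≤ 2 := by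
  have hχ' (g : G) : χ g =
      (c.mapRange Int.cast Int.cast_zero).sum fun lam (a : ℂ) => a * (lam g : ℂ) := by
    rw [hχ, Finsupp.sum_mapRange_index fun _ => zero_mul _]
  have hdiff : |((c η - c θ : ℤ) : ℝ)| ≤ √2 * 2 := by
    rw [← Complex.norm_intCast, Int.cast_sub]
    exact norm_coeff_sub_coeff_le hχ' zero_le_two hbound η θ
  have hsqrt : √2 * 2 < 3 := by linarith [Real.sqrt_two_lt_three_halves]
  have hlt : |c η - c θ| < 3 := by exact_mod_cast hdiff.trans_lt hsqrt
  exact Int.lt_add_one_iff.mp hlt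

theorem stmt_16 {G : Type*} [CommGroup G] [Fintype G]
    (c : (G →* ℂˣ) →₀ ℤ) (χ : G → ℂ)
    -- χ = ∑_λ c_λ λ, a generalized character of G
    (hχ : ∀ g : G, χ g = c.sum fun lam n => (n : ℂ) * (lam g : ℂ))
    -- values on nonidentity elements are sums of at most two roots of unity
    (hval : ∀ x : G, x ≠ 1 → IsSumAtMostTwoRootsOfUnity (χ x)) :
    ∀ η θ : G →* ℂˣ, |c η - c θ| ≤ 2 :=
  stmt_16_general c χ hχ fun x hx => (hval x hx).norm_le_two
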